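/- For every nonnegative integer l and every real t, Σ_{n≥0} f^S_{n,2l} · t^{2n}/(2n)! = det_{0≤j,k<l} ( I_{j−k}(2t) − I_{j+k+2}(2t) ). -/

import Mathlib

noncomputable section

/-- `lisLE π l` means the longest increasing subsequence of the permutation `π`
has length at most `l`. -/
def lisLE {N : ℕ} (π : Equiv.Perm (Fin N)) (l : ℕ) : Prop :=
  ∀ (k : ℕ) (f : Fin k → Fin N), StrictMono f → StrictMono (fun i => π (f i)) → k ≤ l

/-- `f^S_{n,l}`: the number of permutations `π` of `{1,…,2n}` with `π = ι∘π⁻¹∘ι`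
and `π(x) ≠ ι(x)` for all `x` (where `ι(x) = 2n+1-x`), whose longest increasing
subsequence has length at most `l`. -/
def fSCount (n l : ℕ) : ℕ :=
  Nat.card {π : Equiv.Perm (Fin (2 * n)) //
    π = Fin.revPerm * π⁻¹ * Fin.revPerm ∧ (∀ x, π x ≠ Fin.revPerm x) ∧ lisLE π l}

/-- The modified Bessel function of the first kind:
`besselI j t = I_j(2t) = Σ_{m≥0} t^{2m+|j|}/(m!·(m+|j|)!)`. -/
def besselI (j : ℤ) (t : ℝ) : ℝ :=
  ∑' m : ℕ, t ^ (2 * m + j.natAbs) /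
    ((Nat.factorial m : ℝ) * (Nat.factorial (m + j.natAbs) : ℝ))

/-!
With `σ = ι ∘ π`, the counted permutations become the perfect matchings `σ` of `2n` points, and
increasing subsequences of `π` become decreasing ones of `σ`. A decreasing set splits into the left
ends of one nest of arcs and the right ends of another, so `L(π) ≤ 2l` says that at most `l` arcs
are mutually nested. Reading the points from right to left and inserting the left end of every
arc into a growth diagram (the vacillating tableaux of Chen, Deng, Du, Stanley and Yan) makes these
matchings equinumerous with the closed walks of `2n` unit steps at the origin of the Weyl chamber
of type `C`, whose walls the bound on nestings provides.

For the walks, the determinant of Bessel series attached to a weight `x` vanishes when `x` lies on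
a wall and its derivative is the sum over the `2l` neighbours of `x`. Its coefficients hence
satisfy the recursion that defines the walks, which is the reflection principle in the form of
Grabiner and Magyar. It remains to evaluate the determinant in the ring of power series that
converge absolutely at `t`.
-/

open Finset

section OptionSums

variable {M ι : Type*} [AddCommMonoid M]

lemma sum_sum_option_eq_diag_add [Fintype ι] [DecidableEq ι] (f : Option ι → ι → M) :
    ∑ o, ∑ c, f o c = ∑ c, f (some c) c + ∑ o, ∑ c, if o = some c then 0 else f o c := by
  rw [sum_comm, sum_comm (s := univ (α := Option ι)), ← sum_add_distrib]
  refine sum_congr rfl fun c _ => ?_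
  rw [sum_ite, sum_const_zero, zero_add, filter_ne']
  exact (add_sum_erase _ (f · c) (mem_univ _)).symm

lemma sum_option_elim_zero {α : Type*} (s : Finset ι) (o : Option α) (f : ι → α → M) :
    ∑ i ∈ s, o.elim 0 (f i) = o.elim 0 fun a => ∑ i ∈ s, f i a := by
  cases o <;> simp only [Option.elim_none, Option.elim_some, sum_const_zero]

end OptionSums

section Dominant

variable {l : ℕ} {v w : Fin l → ℤ} {c s : Fin l} {a : ℤ}

/-- An integer vector is dominant if it lies in the closed Weyl chamber of type C, in the
convention `0 ≤ v 0 ≤ v 1 ≤ ⋯`; such a vector is a partition read from its smallest part. -/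
def IsDominant (v : Fin l → ℤ) : Prop := Monotone v ∧ 0 ≤ v

instance : DecidablePred (IsDominant (l := l)) := fun v =>
  decidable_of_iff (Monotone v ∧ ∀ r, 0 ≤ v r) Iff.rfl

lemma isDominant_zero : IsDominant (0 : Fin l → ℤ) := ⟨monotone_const, le_rfl⟩

lemma IsDominant.sup (hv : IsDominant v) (hw : IsDominant w) : IsDominant (v ⊔ w) :=
  ⟨hv.1.sup hw.1, le_sup_of_le_left hv.2⟩

lemma IsDominant.inf (hv : IsDominant v) (hw : IsDominant w) : IsDominant (v ⊓ w) :=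
  ⟨hv.1.inf hw.1, le_inf hv.2 hw.2⟩

lemma isDominant_add_single_iff (hv : IsDominant v) :
    IsDominant (v + Pi.single c 1) ↔ ∀ r, c < r → v c < v r := by
  refine ⟨fun h r hr => ?_, fun h => ⟨fun p q hpq => ?_, ?_⟩⟩
  · have := h.1 hr.le
    simp only [Pi.add_apply, Pi.single_eq_same, Pi.single_eq_of_ne hr.ne'] at this
    omega
  · have := hv.1 hpq
    have := h q
    simp only [Pi.add_apply, Pi.single_apply]
    grind
  · exact add_nonneg hv.2 (Pi.single_nonneg.2 zero_le_one)

lemma isDominant_sub_single_iff (hv : IsDominant v) :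
    IsDominant (v - Pi.single s 1) ↔ 0 < v s ∧ ∀ r, r < s → v r < v s := by
  refine ⟨fun h => ⟨?_, fun r hr => ?_⟩, fun h => ⟨fun p q hpq => ?_, fun r => ?_⟩⟩
  · have := h.2 s
    simp only [Pi.zero_apply, Pi.sub_apply, Pi.single_eq_same] at this
    omega
  · have := h.1 hr.le
    simp only [Pi.sub_apply, Pi.single_eq_same, Pi.single_eq_of_ne hr.ne] at this
    omega
  · have := hv.1 hpq
    have := h.2 p
    simp only [Pi.sub_apply, Pi.single_apply]
    grind
  · have := hv.2 r
    simp only [Pi.sub_apply, Pi.single_apply, Pi.zero_apply] at this ⊢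
    grind

/-- The last row of the shape `v` among those of length `a`, if there is one. -/
def lastRow (v : Fin l → ℤ) (a : ℤ) : Option (Fin l) :=
  if h : (univ.filter (v · = a)).Nonempty then some ((univ.filter (v · = a)).max' h) else none

lemma lastRow_eq_none_iff : lastRow v a = none ↔ ∀ r, v r ≠ a := by
  simp [lastRow, filter_nonempty_iff]

lemma lastRow_eq_some_iff : lastRow v a = some c ↔ v c = a ∧ ∀ r, c < r → v r ≠ a := by
  rw [lastRow]
  split_ifs with h
  · rw [Option.some_inj, max'_eq_iff]
    simp only [mem_filter_univ]
    exact and_congr_right fun _ => forall_congr' fun r => by rw [← not_le, not_imp_not]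
  · simp only [false_iff, not_and]
    exact fun hc => absurd ⟨c, by simpa using hc⟩ h

lemma IsDominant.lastRow_eq_some_iff (hv : IsDominant v) :
    lastRow v a = some c ↔ v c = a ∧ IsDominant (v + Pi.single c 1) := by
  rw [_root_.lastRow_eq_some_iff, isDominant_add_single_iff hv]
  refine and_congr_right fun hc => forall₂_congr fun r hr => ?_
  rw [← hc, (hv.1 hr.le).lt_iff_ne, ne_comm]

lemma exists_lastRow_apply_eq_some (v : Fin l → ℤ) (s : Fin l) : ∃ c, lastRow v (v s) = some c :=
  Option.ne_none_iff_exists'.1 fun h => lastRow_eq_none_iff.1 h s rfl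

lemma IsDominant.existsUnique_first_row (hv : IsDominant v) (hc : 0 < v c) :
    ∃! s, v s = v c ∧ IsDominant (v - Pi.single s 1) := by
  have hne : (univ.filter (v · = v c)).Nonempty := ⟨c, by simp⟩
  simp only [isDominant_sub_single_iff hv]
  set m := (univ.filter (v · = v c)).min' hne
  have hm : v m = v c := by simpa using min'_mem _ hne
  refine ⟨m, ⟨hm, hm ▸ hc, fun r hr => (hv.1 hr.le).lt_of_ne fun h => ?_⟩, ?_⟩
  · exact hr.not_ge (min'_le _ _ (by simpa using h.trans hm))
  · rintro s ⟨hs, -, hlt⟩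
    refine ((min'_le _ _ (by simpa using hs)).eq_or_lt.resolve_right fun h => ?_).symm
    exact (hlt m h).ne (hm.trans hs.symm)

lemma IsDominant.elim_lastRow {M : Type*} [AddCommMonoid M] (hv : IsDominant v) (a : ℤ)
    (W : Fin l → M) : (lastRow v a).elim 0 W =
      ∑ c with IsDominant (v + Pi.single c 1), if v c = a then W c else 0 := by
  have key (o : Option (Fin l)) : o.elim 0 W = ∑ c, if o = some c then W c else 0 := by
    cases o <;> simp
  simp only [key, hv.lastRow_eq_some_iff, sum_filter, ← ite_and, and_comm]

-- An addable row is either the last empty row or the last row of a block of equal nonzero rows;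
-- in the latter case the first row of the block is removable.
lemma IsDominant.sum_addable {M : Type*} [AddCommMonoid M] (hv : IsDominant v) (W : Fin l → M) :
    ∑ c with IsDominant (v + Pi.single c 1), W c = (lastRow v 0).elim 0 W +
      ∑ s with IsDominant (v - Pi.single s 1), (lastRow v (v s)).elim 0 W := by
  simp only [hv.elim_lastRow]
  rw [sum_comm, ← sum_add_distrib]
  refine sum_congr rfl fun c _ => ?_
  obtain hc | hc : 0 = v c ∨ 0 < v c := (hv.2 c).eq_or_lt
  · rw [if_pos hc.symm, sum_eq_zero, add_zero]
    intro s hs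
    rw [mem_filter_univ, isDominant_sub_single_iff hv] at hs
    exact if_neg (hc.symm.trans_ne hs.1.ne)
  · obtain ⟨m, ⟨hm, hmv⟩, huniq⟩ := hv.existsUnique_first_row hc
    rw [if_neg hc.ne', zero_add, sum_eq_single_of_mem m (by simpa using hmv), if_pos hm.symm]
    intro s hs hsm
    exact if_neg fun h => hsm (huniq s ⟨h.symm, by simpa using hs⟩)

end Dominant

section LatticeWords

variable {l : ℕ} {v : Fin l → ℤ} {o : Option (Fin l)} {c : Fin l} {i j : ℕ}

/-- The unit vector of a letter, the blank letter `none` having weight zero. -/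
def letterWeight (o : Option (Fin l)) : Fin l → ℤ := o.elim 0 (Pi.single · 1)

@[simp] lemma letterWeight_none : letterWeight (none : Option (Fin l)) = 0 := rfl

@[simp] lemma letterWeight_some : letterWeight (some c) = Pi.single c 1 := rfl

lemma letterWeight_nonneg : 0 ≤ letterWeight o := by
  cases o
  · rfl
  · exact Pi.single_nonneg.2 zero_le_one

lemma letterWeight_apply_of_ne (h : o ≠ some c) : letterWeight o c = 0 := by
  cases o
  · rfl
  · exact Pi.single_eq_of_ne (by simpa [eq_comm] using h) 1

lemma add_letterWeight_sup_add_single (v : Fin l → ℤ) (h : o ≠ some c) :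
    (v + letterWeight o) ⊔ (v + Pi.single c 1) = v + letterWeight o + Pi.single c 1 := by
  ext r
  have := letterWeight_nonneg (o := o) r
  have := letterWeight_apply_of_ne h
  simp only [Pi.sup_apply, Pi.add_apply, Pi.single_apply, Pi.zero_apply] at *
  grind

lemma add_letterWeight_inf_add_single (v : Fin l → ℤ) (h : o ≠ some c) :
    (v + letterWeight o) ⊓ (v + Pi.single c 1) = v := by
  ext r
  have := letterWeight_nonneg (o := o) r
  have := letterWeight_apply_of_ne h
  simp only [Pi.inf_apply, Pi.add_apply, Pi.single_apply, Pi.zero_apply] at *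
  grind

lemma isDominant_of_add_of_add (h : o ≠ some c) (ho : IsDominant (v + letterWeight o))
    (hc : IsDominant (v + Pi.single c 1)) : IsDominant v :=
  add_letterWeight_inf_add_single v h ▸ ho.inf hc

lemma isDominant_add_add (h : o ≠ some c) (ho : IsDominant (v + letterWeight o))
    (hc : IsDominant (v + Pi.single c 1)) : IsDominant (v + letterWeight o + Pi.single c 1) :=
  add_letterWeight_sup_add_single v h ▸ ho.sup hc

/-- Words in the rows of a shape and the blank letter `none`. The head of the list is the last
letter, and positions are counted from the end of the list. -/
abbrev LatticeWord (l : ℕ) := List (Option (Fin l))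

namespace LatticeWord

/-- The content of a word: the number of occurrences of every row. -/
def shape : LatticeWord l → Fin l → ℤ
  | [] => 0
  | o :: T => shape T + letterWeight o

variable {M : Type*} [AddCommMonoid M] {T : LatticeWord l} {p : LatticeWord l × Fin l}

/-- Growth-diagram insertion of a letter at the blank position `i`: the new word together with the
row in which its content has grown. The letter enters in the last empty row, and is pushed to the
end of the next block of equal rows whenever its row coincides with a later letter. The result is
`none` if position `i` is not blank or there is no empty row. -/
def insertLetter : LatticeWord l → ℕ → Option (LatticeWord l × Fin l)
  | [], _ => none
  | o :: T, i =>
    if i = T.length then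
      if o = none then (lastRow (shape T) 0).map fun c => (some c :: T, c) else none
    else (insertLetter T i).bind fun p =>
      if o = some p.2 then
        (lastRow (shape (o :: T)) (shape (o :: T) p.2)).map fun c => (some c :: p.1, c)
      else some (o :: p.1, p.2)

lemma lt_length_of_insertLetter_eq_some {T : LatticeWord l} (h : insertLetter T i = some p) :
    i < T.length := by
  induction T generalizing p with
  | nil => simp [insertLetter] at h
  | cons o T ih =>
    rw [insertLetter] at h
    split_ifs at h with hi
    · simp [hi]
    · obtain ⟨q, hq, -⟩ := Option.bind_eq_some_iff.1 h
      exact (ih hq).trans (Nat.lt_succ_self _)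

/-- The sum of `F` over all insertions in `T`. -/
def insertionSum (T : LatticeWord l) (F : LatticeWord l × Fin l → M) : M :=
  ∑ i ∈ range T.length, (insertLetter T i).elim 0 F

lemma insertionSum_cons (o : Option (Fin l)) (T : LatticeWord l) (F : LatticeWord l × Fin l → M) :
    insertionSum (o :: T) F =
      (if o = none then (lastRow (shape T) 0).elim 0 fun c => F (some c :: T, c) else 0) +
      insertionSum T fun p => if o = some p.2 then
        (lastRow (shape (o :: T)) (shape (o :: T) p.2)).elim 0 fun c => F (some c :: p.1, c)
        else F (o :: p.1, p.2) := by
  rw [insertionSum, List.length_cons, sum_range_succ, add_comm]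
  congr 1
  · rw [insertLetter, if_pos rfl]
    split_ifs
    · cases lastRow (shape T) 0 <;> rfl
    · rfl
  · refine sum_congr rfl fun i hi => ?_
    rw [insertLetter, if_neg (mem_range.1 hi).ne]
    rcases insertLetter T i with _ | p
    · rfl
    · simp only [Option.bind_some, Option.elim_some]
      split_ifs
      · cases lastRow (shape (o :: T)) (shape (o :: T) p.2) <;> rfl
      · rfl

/-- The lattice words of length `j` and content `v`, that is, those whose initial words all have
dominant content (the dominance of `v` itself is not checked). -/
def latticeWords : ℕ → (Fin l → ℤ) → Finset (LatticeWord l)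
  | 0, v => if v = 0 then {[]} else ∅
  | j + 1, v => (univ.filter fun o => IsDominant (v - letterWeight o)).biUnion fun o =>
      (latticeWords j (v - letterWeight o)).image (o :: ·)

lemma sum_latticeWords_succ (j : ℕ) (v : Fin l → ℤ) (F : LatticeWord l → M) :
    ∑ T ∈ latticeWords (j + 1) v, F T =
      ∑ o with IsDominant (v - letterWeight o),
        ∑ T ∈ latticeWords j (v - letterWeight o), F (o :: T) := by
  rw [latticeWords, sum_biUnion]
  · exact sum_congr rfl fun o _ => sum_image List.cons_injective.injOn
  · intro o _ o' _ h
    simp only [Function.onFun, disjoint_left, mem_image]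
    rintro _ ⟨T, -, rfl⟩ ⟨T', -, hT'⟩
    exact h (List.cons.inj hT').1.symm

lemma shape_of_mem_latticeWords {T : LatticeWord l} (h : T ∈ latticeWords j v) : T.shape = v := by
  induction j generalizing v T with
  | zero =>
    rw [latticeWords] at h
    split_ifs at h with hv
    · rw [mem_singleton.1 h, hv, shape]
    · exact absurd h (notMem_empty T)
  | succ j ih =>
    simp only [latticeWords, mem_biUnion, mem_image] at h
    obtain ⟨o, -, T, hT, rfl⟩ := h
    rw [shape, ih hT, sub_add_cancel]

lemma latticeWords_zero_right (j : ℕ) :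
    latticeWords j (0 : Fin l → ℤ) = {List.replicate j none} := by
  induction j with
  | zero => simp [latticeWords]
  | succ j ih =>
    have key : ({o | IsDominant (0 - letterWeight o)} : Finset (Option (Fin l))) = {none} := by
      ext o
      cases o with
      | none => simp [isDominant_zero]
      | some s => simp [isDominant_sub_single_iff isDominant_zero, -zero_sub]
    rw [latticeWords, key, singleton_biUnion, letterWeight_none, sub_zero, ih, image_singleton,
      List.replicate_succ]

/-- The common part of the two double counts of insertions in words of length `j + 1`: the last
letter `o` differs from the row `c` in which the content grows, and the insertion takes place
before it. -/
def offDiagonalSum (j : ℕ) (v : Fin l → ℤ) (F : LatticeWord l × Fin l → M) : M :=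
  ∑ o, ∑ c, if o = some c then 0 else if IsDominant (v - letterWeight o + Pi.single c 1) then
    ∑ T ∈ latticeWords j (v - letterWeight o + Pi.single c 1), F (o :: T, c) else 0

lemma sum_addable_latticeWords_succ (hv : IsDominant v) (F : LatticeWord l × Fin l → M) :
    ∑ c with IsDominant (v + Pi.single c 1),
        ∑ T ∈ latticeWords (j + 1) (v + Pi.single c 1), F (T, c) =
      ∑ c with IsDominant (v + Pi.single c 1), ∑ T ∈ latticeWords j v, F (some c :: T, c) +
        offDiagonalSum j v F := by
  have expand : ∑ c with IsDominant (v + Pi.single c 1),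
      ∑ T ∈ latticeWords (j + 1) (v + Pi.single c 1), F (T, c) =
      ∑ o, ∑ c, if IsDominant (v + Pi.single c 1) ∧
          IsDominant (v - letterWeight o + Pi.single c 1) then
        ∑ T ∈ latticeWords j (v - letterWeight o + Pi.single c 1), F (o :: T, c) else 0 := by
    simp only [sum_latticeWords_succ, sum_filter, ← sub_add_eq_add_sub, ite_and]
    rw [sum_comm]
    refine sum_congr rfl fun c _ => ?_
    split_ifs
    · rfl
    · exact sum_const_zero.symm
  rw [expand, sum_sum_option_eq_diag_add, offDiagonalSum]
  refine congrArg₂ (· + ·) ?_ ?_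
  · simp only [letterWeight_some, sub_add_cancel, hv, and_true, sum_filter]
  · refine sum_congr rfl fun o _ => sum_congr rfl fun c _ => ?_
    split_ifs with h h₁ h₂ h₂
    · rfl
    · rfl
    · exact absurd h₁.2 h₂
    · refine absurd ⟨?_, h₂⟩ h₁
      simpa using isDominant_add_add h (by simpa using hv) h₂
    · rfl

lemma sum_insertionSum_cons (j : ℕ) (v : Fin l → ℤ) (o : Option (Fin l))
    (F : LatticeWord l × Fin l → M) :
    ∑ T ∈ latticeWords j v, insertionSum (o :: T) F =
      (if o = none then (lastRow v 0).elim 0 fun c => ∑ T ∈ latticeWords j v, F (some c :: T, c)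
        else 0) +
      ∑ T ∈ latticeWords j v, insertionSum T fun p => if o = some p.2 then
        (lastRow (v + letterWeight o) ((v + letterWeight o) p.2)).elim 0
          fun c => F (some c :: p.1, c)
        else F (o :: p.1, p.2) := by
  simp only [insertionSum_cons, sum_add_distrib]
  refine congrArg₂ (· + ·) ?_ ?_
  · split_ifs
    · rw [← sum_option_elim_zero]
      exact sum_congr rfl fun T hT => by rw [shape_of_mem_latticeWords hT]
    · exact sum_const_zero
  · refine sum_congr rfl fun T hT => ?_
    rw [shape, shape_of_mem_latticeWords hT]

lemma sum_insertionSum_succ (hv : IsDominant v) (F : LatticeWord l × Fin l → M)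
    (ih : ∀ {w : Fin l → ℤ} (_ : IsDominant w) (F : LatticeWord l × Fin l → M),
      ∑ T ∈ latticeWords j w, insertionSum T F = ∑ c with IsDominant (w + Pi.single c 1),
        ∑ T ∈ latticeWords j (w + Pi.single c 1), F (T, c)) :
    ∑ T ∈ latticeWords (j + 1) v, insertionSum T F =
      (lastRow v 0).elim 0 (fun c => ∑ T ∈ latticeWords j v, F (some c :: T, c)) +
      ∑ s with IsDominant (v - Pi.single s 1),
        (lastRow v (v s)).elim 0 (fun c => ∑ T ∈ latticeWords j v, F (some c :: T, c)) +
      offDiagonalSum j v F := by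
  have expand : ∑ T ∈ latticeWords (j + 1) v, insertionSum T F =
      (lastRow v 0).elim 0 (fun c => ∑ T ∈ latticeWords j v, F (some c :: T, c)) +
      ∑ o, ∑ c, if IsDominant (v - letterWeight o) ∧
          IsDominant (v - letterWeight o + Pi.single c 1) then
        ∑ T ∈ latticeWords j (v - letterWeight o + Pi.single c 1), if o = some c then
          (lastRow v (v c)).elim 0 (fun c => F (some c :: T, c)) else F (o :: T, c)
        else 0 := by
    simp only [sum_latticeWords_succ, sum_insertionSum_cons, sum_add_distrib, ite_and]
    refine congrArg₂ (· + ·) ?_ ?_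
    · simp [hv]
    · rw [sum_filter]
      refine sum_congr rfl fun o _ => ?_
      split_ifs with ho
      · rw [ih ho _, sum_filter, sub_add_cancel]
      · exact (sum_eq_zero fun _ _ => rfl).symm
  rw [expand, sum_sum_option_eq_diag_add, ← add_assoc, offDiagonalSum]
  refine congrArg₂ (· + ·) ?_ ?_
  · simp only [letterWeight_some, sub_add_cancel, hv, and_true, if_true, sum_option_elim_zero,
      sum_filter]
  · refine sum_congr rfl fun o _ => sum_congr rfl fun c _ => ?_
    split_ifs with h h₁ h₂ h₂
    · rfl
    · rfl
    · exact absurd h₁.2 h₂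
    · exact absurd ⟨isDominant_of_add_of_add h (by simpa using hv) h₂, h₂⟩ h₁
    · rfl

-- Insertion is a bijection from the pairs of a lattice word of content `v` and a position at which
-- it succeeds onto the lattice words whose content is `v` plus one box. Only the equality of the
-- sums of a function over both sides is needed, and it has a direct inductive proof.
lemma sum_insertionSum (hv : IsDominant v) (F : LatticeWord l × Fin l → M) :
    ∑ T ∈ latticeWords j v, insertionSum T F =
      ∑ c with IsDominant (v + Pi.single c 1),
        ∑ T ∈ latticeWords j (v + Pi.single c 1), F (T, c) := by
  induction j generalizing v F with
  | zero =>
    have hne (c : Fin l) : v + Pi.single c 1 ≠ 0 := fun h => by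
      have hc := hv.2 c
      have := congrFun h c
      simp only [Pi.add_apply, Pi.single_eq_same, Pi.zero_apply] at this hc
      omega
    simp only [latticeWords, hne, if_false, sum_empty, sum_const_zero]
    split_ifs <;> simp [insertionSum]
  | succ j ih =>
    rw [sum_insertionSum_succ hv F ih, sum_addable_latticeWords_succ hv, hv.sum_addable]

/-- The number of ways to complete a word to one without blanks among its last `j` positions, by
successively removing the last letter if it is a row, or inserting it if it is blank. -/
def completions : ℕ → LatticeWord l → ℕ
  | 0, _ => 1
  | _ + 1, [] => 1
  | j + 1, some _ :: T => completions j T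
  | j + 1, none :: T => insertionSum T fun p => completions j p.1

end LatticeWord

/-- The number of walks of length `n` with unit steps among the dominant vectors, from `v` to the
origin. -/
def dominantWalks : ℕ → (Fin l → ℤ) → ℕ
  | 0, v => if v = 0 then 1 else 0
  | n + 1, v => ∑ p with IsDominant (v - Pi.single p 1), dominantWalks n (v - Pi.single p 1) +
      ∑ p with IsDominant (v + Pi.single p 1), dominantWalks n (v + Pi.single p 1)

namespace LatticeWord

lemma sum_completions (hv : IsDominant v) :
    ∑ T ∈ latticeWords j v, completions j T = dominantWalks j v := by
  induction j generalizing v with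
  | zero =>
    rw [latticeWords, dominantWalks]
    split_ifs <;> simp [completions]
  | succ j ih =>
    rw [sum_latticeWords_succ, sum_filter, Fintype.sum_option, dominantWalks, add_comm]
    simp only [letterWeight_none, letterWeight_some, sub_zero, hv, if_true, completions,
      sum_insertionSum hv]
    simp only [sum_filter]
    refine congrArg₂ (· + ·) ?_ ?_ <;>
      exact sum_congr rfl fun p _ => ite_congr rfl ih fun _ => rfl

lemma completions_replicate_none (j : ℕ) :
    completions j (List.replicate j (none : Option (Fin l))) = dominantWalks j (0 : Fin l → ℤ) := by
  rw [← sum_completions isDominant_zero, latticeWords_zero_right, sum_singleton]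

end LatticeWord
end LatticeWords

section NumRows

variable {l : ℕ} {v w : Fin l → ℤ} {r : Fin l}

/-- The number of nonzero rows of a shape. -/
def numRows (v : Fin l → ℤ) : ℕ := #{r | v r ≠ 0}

lemma numRows_le (v : Fin l → ℤ) : numRows v ≤ l := by
  simpa [numRows] using card_le_univ (univ.filter fun r => v r ≠ 0)

lemma numRows_mono (hv : 0 ≤ v) (h : v ≤ w) : numRows v ≤ numRows w := by
  refine card_le_card fun r => ?_
  simp only [mem_filter_univ]
  exact fun hr => (((hv r).lt_of_ne' hr).trans_le (h r)).ne'

lemma IsDominant.isUpperSet_ne_zero (hv : IsDominant v) : IsUpperSet {r | v r ≠ 0} :=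
  fun _ _ hab ha => (((hv.2 _).lt_of_ne' ha).trans_le (hv.1 hab)).ne'

lemma numRows_sup (hv : IsDominant v) (hw : IsDominant w) :
    numRows (v ⊔ w) = max (numRows v) (numRows w) := by
  have hunion : univ.filter (fun r => (v ⊔ w) r ≠ 0) =
      univ.filter (fun r => v r ≠ 0) ∪ univ.filter fun r => w r ≠ 0 := by
    ext r
    have h₁ : 0 ≤ v r := hv.2 r
    have h₂ : 0 ≤ w r := hw.2 r
    simp only [mem_union, mem_filter_univ, Pi.sup_apply]
    grind
  rw [numRows, hunion, numRows, numRows]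
  rcases hv.isUpperSet_ne_zero.total hw.isUpperSet_ne_zero with h | h
  · have h : univ.filter (fun r => v r ≠ 0) ⊆ univ.filter fun r => w r ≠ 0 :=
      monotone_filter_right univ fun r _ => @h r
    rw [union_eq_right.2 h, max_eq_right (card_le_card h)]
  · have h : univ.filter (fun r => w r ≠ 0) ⊆ univ.filter fun r => v r ≠ 0 :=
      monotone_filter_right univ fun r _ => @h r
    rw [union_eq_left.2 h, max_eq_left (card_le_card h)]

lemma numRows_add_single_of_ne_zero (hv : IsDominant v) (h : v r ≠ 0) :
    numRows (v + Pi.single r 1) = numRows v := by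
  refine congrArg card (filter_congr fun a _ => ?_)
  have : (0 : ℤ) ≤ v a := hv.2 a
  simp only [Pi.add_apply, Pi.single_apply]
  grind

lemma numRows_add_single_of_eq_zero (h : v r = 0) :
    numRows (v + Pi.single r 1) = numRows v + 1 := by
  rw [numRows, numRows, ← card_insert_of_notMem (a := r) (by simp [h])]
  refine congrArg card (Finset.ext fun a => ?_)
  simp only [mem_filter_univ, mem_insert, Pi.add_apply, Pi.single_apply]
  grind

end NumRows

namespace LatticeWord

variable {l : ℕ} {T : LatticeWord l} {p q : LatticeWord l × Fin l} {o o' : Option (Fin l)}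
  {c : Fin l} {i a : ℕ}

/-- A word is a lattice word if all its initial words (the tails of the list) have dominant
content. -/
def IsLattice : LatticeWord l → Prop
  | [] => True
  | o :: T => IsLattice T ∧ IsDominant (shape (o :: T))

lemma IsLattice.isDominant (h : T.IsLattice) : IsDominant T.shape := by
  cases T with
  | nil => exact isDominant_zero
  | cons o T => exact h.2

/-- The number of nonzero rows of the content of the initial word of length `a`. -/
def prefixRows (T : LatticeWord l) (a : ℕ) : ℕ := numRows (shape (T.drop (T.length - a)))

lemma prefixRows_of_length_le (h : T.length ≤ a) : T.prefixRows a = numRows T.shape := by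
  rw [prefixRows, Nat.sub_eq_zero_of_le h, List.drop_zero]

lemma prefixRows_cons_of_le (o : Option (Fin l)) (h : a ≤ T.length) :
    prefixRows (o :: T) a = T.prefixRows a := by
  rw [prefixRows, List.length_cons, Nat.succ_sub h, List.drop_succ_cons, prefixRows]

lemma prefixRows_cons_of_lt (o : Option (Fin l)) (h : T.length < a) :
    prefixRows (o :: T) a = numRows (shape (o :: T)) :=
  prefixRows_of_length_le h

/-- Position `a` of the word exists and is not blank. -/
def IsFilled (T : LatticeWord l) (a : ℕ) : Prop := ∃ s, T.reverse[a]? = some (some s)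

lemma isFilled_cons_of_ne (o : Option (Fin l)) (h : a ≠ T.length) :
    IsFilled (o :: T) a ↔ T.IsFilled a := by
  simp only [IsFilled, List.reverse_cons]
  grind

lemma isFilled_cons_length (o : Option (Fin l)) (T : LatticeWord l) :
    IsFilled (o :: T) T.length ↔ o ≠ none := by
  cases o <;> simp [IsFilled]

/-- The word and the row `p` arise from `T` by adding a letter at position `i`; the inserted letter
forces one more row than there were at time `i`, but none beyond that. -/
structure IsInsertion (T : LatticeWord l) (i : ℕ) (p : LatticeWord l × Fin l) : Prop where
  length_eq : p.1.length = T.length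
  isLattice : p.1.IsLattice
  shape_eq : p.1.shape = T.shape + Pi.single p.2 1
  isFilled_iff : ∀ a, p.1.IsFilled a ↔ T.IsFilled a ∨ a = i
  prefixRows_of_le : ∀ a ≤ i, p.1.prefixRows a = T.prefixRows a
  prefixRows_of_lt : ∀ a, i < a → p.1.prefixRows a = max (T.prefixRows a) (T.prefixRows i + 1)

lemma isInsertion_none_cons (hT : T.IsLattice) (hc : lastRow T.shape 0 = some c) :
    IsInsertion (none :: T) T.length (some c :: T, c) := by
  obtain ⟨hc₀, hdom⟩ := hT.isDominant.lastRow_eq_some_iff.1 hc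
  refine ⟨rfl, ⟨hT, hdom⟩, by simp [shape], fun a => ?_, fun a ha => ?_, fun a ha => ?_⟩
  · obtain rfl | ha := eq_or_ne a T.length
    · simp [isFilled_cons_length]
    · simp [isFilled_cons_of_ne, ha]
  · simp only [prefixRows_cons_of_le _ ha]
  · rw [prefixRows_cons_of_lt _ ha, prefixRows_cons_of_lt _ ha, prefixRows_cons_of_le _ le_rfl,
      prefixRows_of_length_le le_rfl, shape, shape, letterWeight_some, letterWeight_none, add_zero,
      numRows_add_single_of_eq_zero hc₀, max_eq_right (Nat.le_succ _)]

lemma IsInsertion.cons (I : IsInsertion T i q) (hi : i < T.length) (ho : o' = none ↔ o = none)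
    (hshape : shape (o' :: q.1) = shape (o :: T) + Pi.single c 1)
    (hdom : IsDominant (shape (o :: T) + Pi.single c 1))
    (hrows : numRows (shape (o :: T) + Pi.single c 1) =
      max (numRows (shape (o :: T))) (T.prefixRows i + 1)) :
    IsInsertion (o :: T) i (o' :: q.1, c) := by
  have hlen := I.length_eq
  refine ⟨by simp [hlen], ⟨I.isLattice, hshape ▸ hdom⟩, hshape, fun a => ?_, fun a ha => ?_,
    fun a ha => ?_⟩
  · obtain rfl | ha := eq_or_ne a T.length
    · rw [← hlen, isFilled_cons_length, hlen, isFilled_cons_length, ne_eq, ho]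
      exact (or_iff_left hi.ne').symm
    · rw [isFilled_cons_of_ne _ (hlen ▸ ha), isFilled_cons_of_ne _ ha, I.isFilled_iff]
  · rw [prefixRows_cons_of_le _ (by omega), prefixRows_cons_of_le _ (by omega),
      I.prefixRows_of_le a ha]
  · rw [prefixRows_cons_of_le (a := i) _ hi.le]
    obtain h | h := le_or_gt a T.length
    · rw [prefixRows_cons_of_le _ (hlen ▸ h), prefixRows_cons_of_le _ h, I.prefixRows_of_lt a ha]
    · rw [prefixRows_cons_of_lt _ (hlen ▸ h), prefixRows_cons_of_lt _ h, hshape, hrows]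

lemma IsInsertion.numRows_shape (I : IsInsertion T i q) (hi : i < T.length) :
    numRows (T.shape + Pi.single q.2 1) = max (numRows T.shape) (T.prefixRows i + 1) := by
  rw [← I.shape_eq, ← prefixRows_of_length_le I.length_eq.le, I.prefixRows_of_lt _ hi,
    prefixRows_of_length_le le_rfl]

lemma IsInsertion.cons_of_ne (I : IsInsertion T i q) (hi : i < T.length)
    (hT : IsLattice (o :: T)) (h : o ≠ some q.2) : IsInsertion (o :: T) i (o :: q.1, q.2) := by
  have hq : IsDominant (T.shape + Pi.single q.2 1) := I.shape_eq ▸ I.isLattice.isDominant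
  have ho : IsDominant (T.shape + letterWeight o) := hT.2
  have hsup := add_letterWeight_sup_add_single T.shape h
  refine I.cons hi Iff.rfl ?_ (hsup ▸ ho.sup hq) ?_
  · rw [shape, shape, I.shape_eq, add_right_comm]
  · have hle : numRows T.shape ≤ numRows (shape (o :: T)) :=
      numRows_mono hT.1.isDominant.2 (le_add_of_nonneg_right letterWeight_nonneg)
    rw [shape] at hle ⊢
    rw [← hsup, numRows_sup ho hq, I.numRows_shape hi, ← max_assoc, max_eq_left hle]

lemma IsInsertion.cons_of_eq (I : IsInsertion T i q) (hi : i < T.length)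
    (hT : IsLattice (some q.2 :: T))
    (hc : lastRow (shape (some q.2 :: T)) (shape (some q.2 :: T) q.2) = some c) :
    IsInsertion (some q.2 :: T) i (some c :: q.1, c) := by
  obtain ⟨hval, hdom⟩ := hT.2.lastRow_eq_some_iff.1 hc
  have hpos : shape (some q.2 :: T) c ≠ 0 := by
    have : 0 ≤ T.shape q.2 := hT.1.isDominant.2 q.2
    rw [hval, shape, Pi.add_apply, letterWeight_some, Pi.single_eq_same]
    omega
  refine I.cons hi (by simp) (by rw [shape, I.shape_eq]; rfl) hdom ?_
  rw [numRows_add_single_of_ne_zero hT.2 hpos, shape, letterWeight_some, I.numRows_shape hi,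
    max_assoc, max_self]

lemma isInsertion_of_insertLetter_eq_some (hT : T.IsLattice) (h : insertLetter T i = some p) :
    IsInsertion T i p := by
  induction T generalizing p with
  | nil => simp [insertLetter] at h
  | cons o T ih =>
    rw [insertLetter] at h
    split_ifs at h with hi ho
    · obtain ⟨c, hc, rfl⟩ := Option.map_eq_some_iff.1 h
      exact hi ▸ ho ▸ isInsertion_none_cons hT.1 hc
    · obtain ⟨q, hq, h⟩ := Option.bind_eq_some_iff.1 h
      have hlt := lt_length_of_insertLetter_eq_some hq
      split_ifs at h with hoq
      · subst hoq
        obtain ⟨c, hc, rfl⟩ := Option.map_eq_some_iff.1 h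
        exact (ih hT.1 hq).cons_of_eq hlt hT hc
      · obtain rfl := Option.some_inj.1 h
        exact (ih hT.1 hq).cons_of_ne hlt hT hoq

lemma insertLetter_eq_none_of_isFilled (h : T.IsFilled i) : insertLetter T i = none := by
  induction T with
  | nil => rfl
  | cons o T ih =>
    rw [insertLetter]
    split_ifs with hi ho
    · rw [hi, ho, isFilled_cons_length] at h
      exact absurd rfl h
    · rfl
    · rw [ih ((isFilled_cons_of_ne o hi).1 h), Option.bind_none]

lemma prefixRows_of_insertLetter_eq_none (hi : i < T.length) (hfill : ¬ T.IsFilled i)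
    (h : insertLetter T i = none) : T.prefixRows i = l := by
  induction T with
  | nil => simp at hi
  | cons o T ih =>
    rw [List.length_cons] at hi
    rw [prefixRows_cons_of_le o (by omega)]
    rw [insertLetter] at h
    split_ifs at h with hiT ho
    · have hne := lastRow_eq_none_iff.1 (Option.map_eq_none_iff.1 h)
      rw [prefixRows_of_length_le hiT.ge, numRows, filter_true_of_mem fun r _ => hne r, card_univ,
        Fintype.card_fin]
    · rw [hiT, isFilled_cons_length] at hfill
      exact absurd ho hfill
    · refine ih (by omega) (by rwa [isFilled_cons_of_ne o hiT] at hfill) ?_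
      refine Option.eq_none_iff_forall_ne_some.2 fun q hq => ?_
      obtain ⟨c, hc⟩ := exists_lastRow_apply_eq_some (shape (o :: T)) q.2
      rw [hq, Option.bind_some, hc] at h
      split_ifs at h
      all_goals simp at h

end LatticeWord

section Matchings

variable {N l : ℕ} {σ τ : Equiv.Perm (Fin N)} {s : Finset (Fin N)} {j x : Fin N} {a b k : ℕ}

/-- A perfect matching of the positions, encoded as a fixed-point-free involution. Its arcs join
every `x` with `x < σ x` to its right end `σ x`. -/
structure IsMatching (σ : Equiv.Perm (Fin N)) : Prop where
  involutive : Function.Involutive σ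
  apply_ne : ∀ x, σ x ≠ x

/-- The matching has at most `l` mutually nested arcs. A nest is given by the set of left ends of
its arcs. -/
def NestBounded (l : ℕ) (σ : Equiv.Perm (Fin N)) : Prop :=
  ∀ s : Finset (Fin N), StrictAntiOn σ s → (∀ x ∈ s, x < σ x) → #s ≤ l

/-- There are `k` mutually nested arcs with left ends below `a` and right ends at least `b`. This
reading presupposes `a ≤ b`, so that every `x` counted is a left end. -/
def HasNest (σ : Equiv.Perm (Fin N)) (b a k : ℕ) : Prop :=
  ∃ s : Finset (Fin N), k ≤ #s ∧ StrictAntiOn σ s ∧ ∀ x ∈ s, (x : ℕ) < a ∧ b ≤ (σ x : ℕ)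

lemma hasNest_zero (σ : Equiv.Perm (Fin N)) (b a : ℕ) : HasNest σ b a 0 :=
  ⟨∅, Nat.zero_le _, by simp [StrictAntiOn]⟩

lemma le_apply_iff_lt_or_eq (hσ : Function.Involutive σ) : j ≤ σ x ↔ j < σ x ∨ x = σ j := by
  rw [le_iff_lt_or_eq, eq_comm, hσ.eq_iff]

lemma hasNest_iff_hasNest_succ_of_le (hσ : Function.Involutive σ) (h : a ≤ σ j) :
    HasNest σ j a k ↔ HasNest σ (j + 1) a k := by
  refine exists_congr fun s => and_congr_right fun _ => and_congr_right fun _ =>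
    forall₂_congr fun x _ => and_congr_right fun hx => ?_
  refine (le_apply_iff_lt_or_eq hσ).trans (or_iff_left ?_)
  rintro rfl
  exact hx.not_ge h

-- Nests inside which an arc ending at `j` fits are nests containing that arc as innermost one.
lemma hasNest_succ_apply_iff (hσ : Function.Involutive σ) :
    HasNest σ (j + 1) (σ j) k ↔
      ∃ s : Finset (Fin N), k < #s ∧ StrictAntiOn σ s ∧ σ j ∈ s ∧ ∀ x ∈ s, j ≤ σ x := by
  constructor
  · rintro ⟨s, hk, hs, hx⟩
    have hj : σ j ∉ s := fun h => (hx _ h).1.ne rfl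
    refine ⟨insert (σ j) s, ?_, ?_, mem_insert_self _ _, ?_⟩
    · rw [card_insert_of_notMem hj]
      omega
    · rw [coe_insert, strictAntiOn_insert_iff]
      refine ⟨fun x hxs _ => ?_, fun x hxs h => ?_, hs⟩
      · rw [hσ]
        exact (hx x hxs).2
      · exact absurd (hx x hxs).1 h.not_gt
    · refine forall_mem_insert _ _ _ |>.2 ⟨(hσ j).ge, fun x hxs => ?_⟩
      exact Nat.le_of_succ_le (hx x hxs).2
  · rintro ⟨s, hk, hs, hj, hx⟩
    refine ⟨s.erase (σ j), ?_, hs.mono (coe_subset.2 (erase_subset _ _)), fun x hxs => ?_⟩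
    · rw [card_erase_of_mem hj]
      omega
    · obtain ⟨hne, hxs⟩ := mem_erase.1 hxs
      have hlt : j < σ x := ((le_apply_iff_lt_or_eq hσ).1 (hx x hxs)).resolve_right hne
      rw [← hσ j] at hlt
      exact ⟨(hs.lt_iff_gt hj hxs).1 hlt, by rwa [hσ] at hlt⟩

lemma hasNest_succ_iff_of_lt (hσ : Function.Involutive σ) (h : σ j < a) :
    HasNest σ j a (k + 1) ↔ HasNest σ (j + 1) a (k + 1) ∨ HasNest σ (j + 1) (σ j) k := by
  rw [hasNest_succ_apply_iff hσ]
  constructor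
  · rintro ⟨s, hk, hs, hx⟩
    by_cases hj : σ j ∈ s
    · exact .inr ⟨s, hk, hs, hj, fun x hxs => (hx x hxs).2⟩
    · refine .inl ⟨s, hk, hs, fun x hxs => ⟨(hx x hxs).1, ?_⟩⟩
      exact ((le_apply_iff_lt_or_eq hσ).1 (hx x hxs).2).resolve_right fun e => hj (e ▸ hxs)
  · rintro (⟨s, hk, hs, hx⟩ | ⟨s, hk, hs, hj, hx⟩)
    · exact ⟨s, hk, hs, fun x hxs => ⟨(hx x hxs).1, Nat.le_of_succ_le (hx x hxs).2⟩⟩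
    · refine ⟨s, hk, hs, fun x hxs => ⟨lt_of_le_of_lt ?_ h, hx x hxs⟩⟩
      exact (hs.le_iff_ge hj hxs).1 ((hσ j).trans_le (hx x hxs))

lemma nestBounded_iff (hσ : Function.Involutive σ) :
    NestBounded l σ ↔ ∀ x, σ x < x → ¬ HasNest σ (x + 1) (σ x) l := by
  simp only [hasNest_succ_apply_iff hσ]
  constructor
  · rintro h x hlt ⟨s, hk, hs, hxs, hle⟩
    refine hk.not_ge (h s hs fun y hy => ?_)
    exact (((hs.le_iff_ge hxs hy).1 ((hσ x).trans_le (hle y hy))).trans_lt hlt).trans_le (hle y hy)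
  · intro h s hs hlt
    by_contra! hk
    have hne : s.Nonempty := card_pos.1 (Nat.zero_lt_of_lt hk)
    have hmem := s.max'_mem hne
    refine h (σ (s.max' hne)) ((hσ _).trans_lt (hlt _ hmem)) ⟨s, hk, hs, ?_, fun y hy => ?_⟩
    · rwa [hσ]
    · exact hs.antitoneOn hy hmem (s.le_max' y hy)

lemma apply_eq_of_le_apply (hσ : Function.Involutive σ) (hτ : Function.Involutive τ)
    (h : Set.EqOn τ σ {x | b ≤ (x : ℕ)}) (hx : b ≤ (σ x : ℕ)) : τ x = σ x := by
  rw [hτ.eq_iff, h hx, hσ]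

lemma HasNest.congr (hσ : Function.Involutive σ) (hτ : Function.Involutive τ)
    (h : Set.EqOn τ σ {x | b ≤ (x : ℕ)}) (hn : HasNest σ b a k) : HasNest τ b a k := by
  obtain ⟨s, hk, hs, hx⟩ := hn
  have key : Set.EqOn τ σ s := fun x hxs => apply_eq_of_le_apply hσ hτ h (hx x hxs).2
  exact ⟨s, hk, hs.congr key.symm, fun x hxs => ⟨(hx x hxs).1, key hxs ▸ (hx x hxs).2⟩⟩

/-- The word `T` of length `b` records the arcs of `σ` with right ends at least `b`, and these
respect the nesting bound. -/
structure Records (σ : Equiv.Perm (Fin N)) (b : ℕ) (T : LatticeWord l) : Prop where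
  isLattice : T.IsLattice
  length_eq : T.length = b
  isFilled_iff : ∀ a : Fin N, a < b → (T.IsFilled a ↔ b ≤ σ a)
  hasNest_iff : ∀ a ≤ b, ∀ k, HasNest σ b a k ↔ k ≤ T.prefixRows a
  not_hasNest : ∀ x : Fin N, b ≤ x → σ x < x → ¬ HasNest σ (x + 1) (σ x) l

namespace Records

variable {T : LatticeWord l} {o : Option (Fin l)} {r : Fin l} {p : LatticeWord l × Fin l}

lemma congr (R : Records σ b T) (hσ : Function.Involutive σ) (hτ : Function.Involutive τ)
    (h : Set.EqOn τ σ {x | b ≤ (x : ℕ)}) : Records τ b T := by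
  refine ⟨R.isLattice, R.length_eq, fun a ha => ?_, fun a ha k => ?_, fun x hx hlt hn => ?_⟩
  · rw [R.isFilled_iff a ha]
    exact ⟨fun h' => by rwa [apply_eq_of_le_apply hσ hτ h h'],
      fun h' => by rwa [apply_eq_of_le_apply hτ hσ h.symm h']⟩
  · rw [← R.hasNest_iff a ha k]
    exact ⟨HasNest.congr hτ hσ h.symm, HasNest.congr hσ hτ h⟩
  · rw [h hx] at hlt hn
    refine R.not_hasNest x hx hlt (hn.congr hτ hσ (h.symm.mono fun y hy => ?_))
    exact hx.trans (Nat.le_of_succ_le hy)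

lemma length_tail (R : Records σ (j + 1) (o :: T)) : T.length = j :=
  Nat.succ.inj R.length_eq

lemma lt_apply_iff (R : Records σ (j + 1) (o :: T)) : j < σ j ↔ o ≠ none := by
  rw [← LatticeWord.isFilled_cons_length o T, R.length_tail, R.isFilled_iff j (Nat.lt_succ_self _)]
  rfl

lemma isFilled_tail_iff (R : Records σ (j + 1) (o :: T)) (hx : x < j) :
    T.IsFilled x ↔ j < σ x := by
  rw [← LatticeWord.isFilled_cons_of_ne o (R.length_tail ▸ Fin.val_ne_of_ne hx.ne),
    R.isFilled_iff x (Nat.lt_succ_of_lt hx)]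
  rfl

lemma hasNest_tail_iff (R : Records σ (j + 1) (o :: T)) (ha : a ≤ j) :
    HasNest σ (j + 1) a k ↔ k ≤ T.prefixRows a := by
  rw [R.hasNest_iff a (Nat.le_succ_of_le ha),
    LatticeWord.prefixRows_cons_of_le o (R.length_tail ▸ ha)]

lemma of_some_cons (R : Records σ (j + 1) (some r :: T)) (hσ : Function.Involutive σ) :
    Records σ j T := by
  have hj : j < σ j := R.lt_apply_iff.2 (Option.some_ne_none r)
  refine ⟨R.isLattice.1, R.length_tail, fun x hx => ?_, fun a ha k => ?_, fun x hx hlt => ?_⟩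
  · rw [R.isFilled_tail_iff hx]
    refine ((le_apply_iff_lt_or_eq hσ).trans (or_iff_left ?_)).symm
    rintro rfl
    exact hj.not_gt hx
  · rw [hasNest_iff_hasNest_succ_of_le hσ (ha.trans hj.le), R.hasNest_tail_iff ha]
  · refine R.not_hasNest x (Nat.lt_of_le_of_ne hx fun h => ?_) hlt
    exact hlt.not_gt (Fin.ext h ▸ hj)

lemma of_none_cons (R : Records σ (j + 1) (none :: T)) (hσ : Function.Involutive σ)
    (hp : T.insertLetter (σ j) = some p) : Records σ j p.1 := by
  have I := LatticeWord.isInsertion_of_insertLetter_eq_some R.isLattice.1 hp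
  have hi : σ j < j :=
    (LatticeWord.lt_length_of_insertLetter_eq_some hp).trans_eq R.length_tail
  refine ⟨I.isLattice, I.length_eq.trans R.length_tail, fun x hx => ?_, fun a ha k => ?_,
    fun x hx hlt => ?_⟩
  · rw [I.isFilled_iff, R.isFilled_tail_iff hx, ← Fin.ext_iff]
    exact (le_apply_iff_lt_or_eq hσ).symm
  · obtain h | h := le_or_gt a (σ j)
    · rw [I.prefixRows_of_le a h, hasNest_iff_hasNest_succ_of_le hσ h, R.hasNest_tail_iff ha]
    · cases k with
      | zero => simp only [hasNest_zero, Nat.zero_le]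
      | succ k =>
        rw [I.prefixRows_of_lt a h, hasNest_succ_iff_of_lt hσ h, R.hasNest_tail_iff ha,
          R.hasNest_tail_iff hi.le, le_max_iff, Nat.succ_le_succ_iff]
  · obtain h | h := Nat.eq_or_lt_of_le hx
    · obtain rfl := Fin.ext h
      have hmax : T.prefixRows (σ j) < l := calc
        T.prefixRows (σ j) < p.1.prefixRows j := by
          rw [I.prefixRows_of_lt j hi]
          exact lt_max_of_lt_right (Nat.lt_succ_self _)
        _ ≤ l := numRows_le _
      rw [R.hasNest_tail_iff hi.le]
      exact hmax.not_ge
    · exact R.not_hasNest x h hlt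

lemma not_nestBounded (R : Records σ (j + 1) (none :: T)) (hσ : Function.Involutive σ)
    (hi : σ j < j) (hp : T.insertLetter (σ j) = none) : ¬ NestBounded l σ := by
  have hfill : ¬ T.IsFilled (σ j) := by
    rw [R.isFilled_tail_iff hi, hσ]
    exact lt_irrefl j
  have hrows := LatticeWord.prefixRows_of_insertLetter_eq_none (R.length_tail ▸ hi) hfill hp
  rw [nestBounded_iff hσ]
  exact fun h => h j hi ((R.hasNest_tail_iff hi.le).2 hrows.ge)

end Records

-- Conjugating by the transposition of `σ j` and `i` exchanges the partners of `j` and `i`.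
lemma exists_isMatching_apply_eq (hσ : IsMatching σ) {i : Fin N} (hij : i < j) (hj : σ j < j)
    (hi : σ i ≤ j) : ∃ τ : Equiv.Perm (Fin N), IsMatching τ ∧
      Set.EqOn τ σ {x | (j : ℕ) + 1 ≤ x} ∧ τ j = i := by
  refine ⟨Equiv.swap (σ j) i * σ * Equiv.swap (σ j) i, ⟨fun x => ?_, fun x h => ?_⟩,
    fun x hx => ?_, ?_⟩ <;> simp only [Equiv.Perm.mul_apply] at *
  · simp only [Equiv.swap_apply_self, hσ.involutive (Equiv.swap (σ j) i x)]
  · refine hσ.apply_ne (Equiv.swap (σ j) i x) ((Equiv.swap (σ j) i).injective ?_)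
    rw [h, Equiv.swap_apply_self]
  · have hx : j < x := hx
    have hxi : σ x ≠ i := fun h => (hσ.involutive.eq_iff.1 h ▸ hi).not_gt hx
    rw [Equiv.swap_apply_of_ne_of_ne (hj.trans hx).ne' (hij.trans hx).ne',
      Equiv.swap_apply_of_ne_of_ne (σ.injective.ne hx.ne') hxi]
  · rw [Equiv.swap_apply_of_ne_of_ne hj.ne' hij.ne', Equiv.swap_apply_left]

open Classical in
/-- The nest-bounded matchings with the same partners as `σ` for all positions from `b` on. -/
def extensions (l : ℕ) (σ : Equiv.Perm (Fin N)) (b : ℕ) : Finset (Equiv.Perm (Fin N)) :=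
  {τ | IsMatching τ ∧ NestBounded l τ ∧ Set.EqOn τ σ {x | b ≤ (x : ℕ)}}

lemma mem_extensions : τ ∈ extensions l σ b ↔
    IsMatching τ ∧ NestBounded l τ ∧ Set.EqOn τ σ {x | b ≤ (x : ℕ)} := by
  simp only [extensions, mem_filter_univ]

lemma eqOn_setOf_le_iff (σ τ : Equiv.Perm (Fin N)) :
    Set.EqOn τ σ {x | (j : ℕ) ≤ x} ↔ Set.EqOn τ σ {x | (j : ℕ) + 1 ≤ x} ∧ τ j = σ j := by
  refine ⟨fun h => ⟨h.mono fun x hx => Nat.le_of_succ_le hx, h (le_refl (j : ℕ))⟩, fun h x hx => ?_⟩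
  obtain hx | hx := Nat.eq_or_lt_of_le hx
  · exact Fin.ext hx ▸ h.2
  · exact h.1 hx

lemma extensions_zero {T : LatticeWord l} (hσ : IsMatching σ) (R : Records σ 0 T) :
    extensions l σ 0 = {σ} := by
  ext τ
  rw [mem_extensions, mem_singleton]
  constructor
  · exact fun h => Equiv.ext fun x => h.2.2 (Nat.zero_le x)
  · rintro rfl
    refine ⟨hσ, ?_, fun _ _ => rfl⟩
    exact (nestBounded_iff hσ.involutive).2 fun x => R.not_hasNest x (Nat.zero_le x)

lemma extensions_succ_of_lt (hσ : IsMatching σ) (h : j < σ j) :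
    extensions l σ (j + 1) = extensions l σ j := by
  ext τ
  rw [mem_extensions, mem_extensions, eqOn_setOf_le_iff]
  refine and_congr_right fun hτ => and_congr_right fun _ => (and_iff_left_of_imp fun hag => ?_).symm
  exact apply_eq_of_le_apply hσ.involutive hτ.involutive hag h

lemma filter_extensions_succ (hag : Set.EqOn τ σ {x | (j : ℕ) + 1 ≤ x}) :
    {υ ∈ extensions l σ (j + 1) | (υ j : ℕ) = τ j} = extensions l τ j := by
  ext υ
  rw [mem_filter, mem_extensions, mem_extensions, eqOn_setOf_le_iff, ← Fin.ext_iff, and_assoc,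
    and_assoc]
  refine and_congr_right fun _ => and_congr_right fun _ => and_congr_left fun _ => ?_
  exact ⟨fun h => h.trans hag.symm, fun h => h.trans hag⟩

lemma card_extensions_succ (hσ : IsMatching σ) (h : σ j < j) :
    #(extensions l σ (j + 1)) =
      ∑ i ∈ range j, #{τ ∈ extensions l σ (j + 1) | (τ j : ℕ) = i} := by
  refine card_eq_sum_card_fiberwise fun τ hτ => ?_
  obtain ⟨hτ, -, hag⟩ := mem_extensions.1 hτ
  suffices τ j < j from mem_coe.2 (mem_range.2 this)
  refine lt_of_le_of_ne (not_lt.1 fun hlt => ?_) (hτ.apply_ne j)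
  have := apply_eq_of_le_apply hτ.involutive hσ.involutive hag.symm hlt
  exact hlt.not_gt (this ▸ h)

lemma card_extensions {T : LatticeWord l} (hb : b ≤ N) (hσ : IsMatching σ) (R : Records σ b T) :
    #(extensions l σ b) = T.completions b := by
  induction b generalizing σ T with
  | zero => rw [extensions_zero hσ R, card_singleton, LatticeWord.completions]
  | succ b ih =>
    obtain ⟨j, rfl⟩ : ∃ j : Fin N, j = b := ⟨⟨b, hb⟩, rfl⟩
    cases T with
    | nil => exact absurd R.length_eq (Nat.succ_ne_zero _).symm
    | cons o T =>
    cases o with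
    | some r =>
      have hj : j < σ j := R.lt_apply_iff.2 (Option.some_ne_none r)
      rw [extensions_succ_of_lt hσ hj, LatticeWord.completions,
        ih j.2.le hσ (R.of_some_cons hσ.involutive)]
    | none =>
      have hj : σ j < j := (hσ.apply_ne j).lt_of_le (not_lt.1 fun h => R.lt_apply_iff.1 h rfl)
      rw [card_extensions_succ hσ hj, LatticeWord.completions, LatticeWord.insertionSum,
        R.length_tail]
      refine sum_congr rfl fun i hi => ?_
      obtain ⟨i, rfl⟩ : ∃ i' : Fin N, i' = i := ⟨⟨i, (mem_range.1 hi).trans j.2⟩, rfl⟩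
      have hij : i < j := mem_range.1 hi
      rcases hp : LatticeWord.insertLetter T i with _ | p
      · rw [Option.elim_none, card_eq_zero, filter_eq_empty_iff]
        intro τ hτ hτj
        obtain ⟨hτ, hbound, hag⟩ := mem_extensions.1 hτ
        obtain rfl : τ j = i := Fin.ext hτj
        exact (R.congr hσ.involutive hτ.involutive hag).not_nestBounded hτ.involutive hij hp hbound
      · have hle : σ i ≤ j := not_lt.1 fun h => Option.some_ne_none p <| hp.symm.trans <|
          LatticeWord.insertLetter_eq_none_of_isFilled ((R.isFilled_tail_iff hij).2 h)
        obtain ⟨τ, hτ, hag, rfl⟩ := exists_isMatching_apply_eq hσ hij hj hle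
        rw [filter_extensions_succ hag, Option.elim_some]
        exact ih j.2.le hτ
          ((R.congr hσ.involutive hτ.involutive hag).of_none_cons hτ.involutive hp)

namespace LatticeWord

lemma shape_replicate_none (l n : ℕ) :
    shape (List.replicate n (none : Option (Fin l))) = 0 := by
  induction n with
  | zero => rfl
  | succ n ih => rw [List.replicate_succ, shape, ih, letterWeight_none, add_zero]

lemma isLattice_replicate_none (l n : ℕ) :
    IsLattice (List.replicate n (none : Option (Fin l))) := by
  induction n with
  | zero => trivial
  | succ n ih =>
    refine ⟨ih, ?_⟩
    rw [← List.replicate_succ, shape_replicate_none]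
    exact isDominant_zero

end LatticeWord

lemma records_replicate_none (l : ℕ) (σ : Equiv.Perm (Fin N)) :
    Records σ N (List.replicate N (none : Option (Fin l))) := by
  refine ⟨LatticeWord.isLattice_replicate_none l N, List.length_replicate, fun x _ => ?_,
    fun a _ k => ?_, fun x hx => absurd x.2 hx.not_gt⟩
  · refine iff_of_false ?_ (σ x).2.not_ge
    simp [LatticeWord.IsFilled]
  · have hrows : LatticeWord.prefixRows (List.replicate N (none : Option (Fin l))) a = 0 := by
      simp [LatticeWord.prefixRows, LatticeWord.shape_replicate_none, numRows]
    rw [hrows, Nat.le_zero]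
    constructor
    · rintro ⟨s, hk, -, hs⟩
      have : s = ∅ := eq_empty_of_forall_notMem fun x hx => (σ x).2.not_ge (hs x hx).2
      rwa [this, card_empty, Nat.le_zero] at hk
    · rintro rfl
      exact hasNest_zero σ N a

lemma isMatching_revPerm (n : ℕ) : IsMatching (Fin.revPerm : Equiv.Perm (Fin (2 * n))) := by
  refine ⟨Fin.rev_rev, fun x hx => ?_⟩
  have := congrArg Fin.val hx
  simp only [Fin.revPerm_apply, Fin.val_rev] at this
  omega

lemma card_isMatching_nestBounded (l n : ℕ) :
    Nat.card {τ : Equiv.Perm (Fin (2 * n)) // IsMatching τ ∧ NestBounded l τ} =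
      dominantWalks (2 * n) (0 : Fin l → ℤ) := by
  rw [← LatticeWord.completions_replicate_none,
    ← card_extensions le_rfl (isMatching_revPerm n) (records_replicate_none l _)]
  refine Nat.subtype_card _ fun τ => mem_extensions.trans ?_
  rw [← and_assoc, and_iff_left_iff_imp]
  exact fun _ x hx => absurd x.2 (not_lt.2 hx)

lemma lisLE_iff {π : Equiv.Perm (Fin N)} : lisLE π k ↔
    ∀ s : Finset (Fin N), StrictAntiOn (Fin.revPerm * π : Equiv.Perm (Fin N)) s → #s ≤ k := by
  constructor
  · intro h s hs
    refine h #s (s.orderEmbOfFin rfl) (s.orderEmbOfFin rfl).strictMono fun a b hab => ?_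
    exact Fin.rev_lt_rev.1 <| hs (s.orderEmbOfFin_mem rfl a) (s.orderEmbOfFin_mem rfl b)
      ((s.orderEmbOfFin rfl).strictMono hab)
  · intro h m f hf hπ
    have hanti : StrictAntiOn (Fin.revPerm * π : Equiv.Perm (Fin N)) (Set.range f) := by
      rintro _ ⟨a, rfl⟩ _ ⟨b, rfl⟩ hab
      exact Fin.rev_lt_rev.2 (hπ (hf.lt_iff_lt.1 hab))
    simpa using h (univ.map ⟨f, hf.injective⟩) (by simpa using hanti)

lemma strictAntiOn_image_of_involutive {α : Type*} [LinearOrder α] {f : α → α} {s : Set α}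
    (hf : Function.Involutive f) (hs : StrictAntiOn f s) : StrictAntiOn f (f '' s) := by
  rintro _ ⟨a, ha, rfl⟩ _ ⟨b, hb, rfl⟩ hab
  rw [hf, hf]
  exact (hs.lt_iff_gt ha hb).1 hab

-- A decreasing set consists of the left ends of one nest and the right ends of another.
lemma NestBounded.card_le_two_mul (h : NestBounded l σ) (hσ : IsMatching σ)
    (hs : StrictAntiOn σ s) : #s ≤ 2 * l := by
  have hleft : #{x ∈ s | x < σ x} ≤ l :=
    h _ (hs.mono (coe_subset.2 (filter_subset _ _))) fun x hx => (mem_filter.1 hx).2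
  have hright : #({x ∈ s | ¬ x < σ x}.map σ.toEmbedding) ≤ l := by
    refine h _ ?_ fun y hy => ?_
    · rw [coe_map]
      exact strictAntiOn_image_of_involutive hσ.involutive
        (hs.mono (coe_subset.2 (filter_subset _ _)))
    · obtain ⟨x, hx, rfl⟩ := mem_map.1 hy
      rw [Equiv.coe_toEmbedding, hσ.involutive]
      exact (hσ.apply_ne x).lt_of_le (not_lt.1 (mem_filter.1 hx).2)
  rw [card_map] at hright
  have := card_filter_add_card_filter_not (s := s) fun x => x < σ x
  omega

-- A nest together with its right ends is a decreasing set of twice its size.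
lemma nestBounded_of_card_le_two_mul (hσ : Function.Involutive σ)
    (h : ∀ s : Finset (Fin N), StrictAntiOn σ s → #s ≤ 2 * l) : NestBounded l σ := by
  intro s hs hlt
  have hcross : ∀ x ∈ s, ∀ y ∈ s, x < σ y := fun x hx y hy => by
    obtain hxy | hxy := le_total x y
    · exact hxy.trans_lt (hlt y hy)
    · exact (hlt x hx).trans_le (hs.antitoneOn hy hx hxy)
  have hdisj : Disjoint s (s.map σ.toEmbedding) := by
    rw [disjoint_left]
    intro x hx hx'
    obtain ⟨y, hy, rfl⟩ := mem_map.1 hx'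
    exact lt_irrefl _ (hcross _ hx y hy)
  have hanti : StrictAntiOn σ (s ∪ s.map σ.toEmbedding : Finset (Fin N)) := by
    rw [coe_union, coe_map]
    rintro x (hx | hx) y (hy | hy) hxy
    · exact hs hx hy hxy
    · obtain ⟨b, hb, rfl⟩ := hy
      rw [Equiv.coe_toEmbedding, hσ]
      exact hcross b hb x hx
    · obtain ⟨a, ha, rfl⟩ := hx
      exact absurd (hcross y hy a ha) hxy.not_gt
    · exact strictAntiOn_image_of_involutive hσ hs hx hy hxy
  have hcard := h _ hanti
  rw [card_union_of_disjoint hdisj, card_map] at hcard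
  omega

lemma isMatching_revPerm_mul_iff {π : Equiv.Perm (Fin N)} :
    IsMatching (Fin.revPerm * π) ↔
      π = Fin.revPerm * π⁻¹ * Fin.revPerm ∧ ∀ x, π x ≠ Fin.revPerm x := by
  have hne (x : Fin N) : (Fin.revPerm * π : Equiv.Perm (Fin N)) x ≠ x ↔ π x ≠ Fin.revPerm x :=
    not_congr Fin.rev_eq_iff
  have hinv : Function.Involutive (Fin.revPerm * π : Equiv.Perm (Fin N)) ↔
      π = Fin.revPerm * π⁻¹ * Fin.revPerm := by
    rw [Equiv.ext_iff]
    refine forall_congr' fun x => ?_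
    simp only [Equiv.Perm.mul_apply, Fin.revPerm_apply]
    rw [← Fin.rev_eq_iff, Equiv.Perm.eq_inv_iff_eq, ← Fin.rev_eq_iff]
  rw [← hinv, ← forall_congr' hne]
  exact ⟨fun h => ⟨h.1, h.2⟩, fun h => ⟨h.1, h.2⟩⟩

theorem fSCount_eq_dominantWalks (l n : ℕ) :
    fSCount n (2 * l) = dominantWalks (2 * n) (0 : Fin l → ℤ) := by
  rw [← card_isMatching_nestBounded, fSCount]
  refine Nat.card_congr (Equiv.subtypeEquiv (Equiv.mulLeft Fin.revPerm) fun π => ?_)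
  rw [← and_assoc, ← isMatching_revPerm_mul_iff, Equiv.coe_mulLeft, lisLE_iff]
  exact and_congr_right fun hσ =>
    ⟨nestBounded_of_card_le_two_mul hσ.involutive, fun h s => h.card_le_two_mul hσ⟩

end Matchings

section DerivationDet

variable {R A M ι : Type*} [DecidableEq ι]

lemma derivation_prod [CommSemiring R] [CommSemiring A] [Algebra R A] [AddCommMonoid M] [Module A M]
    [Module R M] (D : Derivation R A M) (s : Finset ι) (f : ι → A) :
    D (∏ i ∈ s, f i) = ∑ p ∈ s, (∏ i ∈ s.erase p, f i) • D (f p) := by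
  induction s using Finset.induction_on with
  | empty => rw [prod_empty, D.map_one_eq_zero, sum_empty]
  | insert a s ha ih =>
    rw [prod_insert ha, D.leibniz, ih, sum_insert ha, erase_insert ha, smul_sum, add_comm]
    refine congrArg _ (sum_congr rfl fun p hp => ?_)
    have hap : a ≠ p := fun h => ha (h ▸ hp)
    rw [erase_insert_of_ne hap, prod_insert fun h => ha (mem_of_mem_erase h), mul_smul]

lemma derivation_det [CommRing R] [CommRing A] [Algebra R A] [Fintype ι] (D : Derivation R A A)
    (B : Matrix ι ι A) :
    D B.det = ∑ p, (B.updateRow p fun q => D (B p q)).det := by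
  have expand (C : Matrix ι ι A) :
      C.det = ∑ σ : Equiv.Perm ι, (σ.sign : A) * ∏ i, C i (σ i) := by
    rw [← Matrix.det_transpose, Matrix.det_apply']
    rfl
  simp only [expand, map_sum, D.leibniz, D.map_intCast, smul_zero, add_zero, derivation_prod,
    smul_sum]
  rw [sum_comm]
  refine sum_congr rfl fun p _ => sum_congr rfl fun σ _ => ?_
  rw [← mul_prod_erase univ _ (mem_univ p), Matrix.updateRow_self, smul_eq_mul, smul_eq_mul,
    mul_comm (D _)]
  congr 2
  exact prod_congr rfl fun i hi => by rw [Matrix.updateRow_ne (ne_of_mem_erase hi)]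

end DerivationDet

section ReflectionPrinciple

open PowerSeries

variable {l : ℕ} {v x : Fin l → ℤ}

/-- The number of simple walks on `ℤ` of length `n` from `0` to `m`. -/
def stepCount : ℕ → ℤ → ℕ
  | 0, m => if m = 0 then 1 else 0
  | n + 1, m => stepCount n (m - 1) + stepCount n (m + 1)

lemma stepCount_neg (n : ℕ) (m : ℤ) : stepCount n (-m) = stepCount n m := by
  induction n generalizing m with
  | zero => simp only [stepCount, neg_eq_zero]
  | succ n ih =>
    rw [stepCount, stepCount, ← ih (m - 1), ← ih (m + 1), neg_sub, neg_add', neg_add_eq_sub,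
      add_comm]

lemma stepCount_neg_natAbs (n : ℕ) (m : ℤ) : stepCount n (-m.natAbs) = stepCount n m := by
  obtain h | h := m.natAbs_eq
  · rw [stepCount_neg, ← h]
  · rw [← h]

lemma stepCount_eq_zero {n : ℕ} {m : ℤ} (h : ∀ k : ℕ, (2 * k - n : ℤ) ≠ m) :
    stepCount n m = 0 := by
  induction n generalizing m with
  | zero => exact if_neg fun hm => h 0 (by simp [hm])
  | succ n ih =>
    rw [stepCount, ih fun k hk => h (k + 1) ?_, ih fun k hk => h k ?_] <;> push_cast <;> omega

lemma stepCount_eq_choose (n k : ℕ) : stepCount n (2 * k - n) = n.choose k := by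
  induction n generalizing k with
  | zero =>
    have hk : 2 * (k : ℤ) - (0 : ℕ) = 0 ↔ k = 0 := by omega
    simp only [stepCount, hk]
    cases k <;> rfl
  | succ n ih =>
    have hright : (2 * k - (n + 1 : ℕ) + 1 : ℤ) = 2 * k - n := by push_cast; ring
    rw [stepCount, hright, ih]
    cases k with
    | zero =>
      rw [stepCount_eq_zero fun k => by push_cast; omega, Nat.choose_zero_right,
        Nat.choose_zero_right]
    | succ k =>
      have hleft : (2 * (k + 1 : ℕ) - (n + 1 : ℕ) - 1 : ℤ) = 2 * k - n := by push_cast; ring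
      rw [hleft, ih, Nat.choose_succ_succ]

lemma stepCount_le (n : ℕ) (m : ℤ) : stepCount n m ≤ 2 ^ n := by
  induction n generalizing m with
  | zero => rw [stepCount]; split_ifs <;> decide
  | succ n ih =>
    rw [stepCount, pow_succ, mul_two]
    exact add_le_add (ih _) (ih _)

/-- The power series of the modified Bessel function `t ↦ I_m(2t)`, as the exponential generating
function of the simple walks from `0` to `m`. -/
def besselSeries (m : ℤ) : ℝ⟦X⟧ := .mk fun n => stepCount n m / n.factorial

lemma besselSeries_neg (m : ℤ) : besselSeries (-m) = besselSeries m := by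
  simp only [besselSeries, stepCount_neg]

lemma constantCoeff_besselSeries (m : ℤ) :
    constantCoeff (besselSeries m) = if m = 0 then 1 else 0 := by
  rw [← coeff_zero_eq_constantCoeff_apply, besselSeries, coeff_mk, stepCount]
  split_ifs <;> simp

lemma derivative_besselSeries (m : ℤ) :
    derivative ℝ (besselSeries m) = besselSeries (m - 1) + besselSeries (m + 1) := by
  ext n
  have : (n.factorial : ℝ) ≠ 0 := Nat.cast_ne_zero.2 n.factorial_ne_zero
  have : (n : ℝ) + 1 ≠ 0 := n.cast_add_one_ne_zero
  simp only [coeff_derivative, besselSeries, coeff_mk, map_add, stepCount, Nat.factorial_succ]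
  push_cast
  field_simp

/-- The row of the reflection determinant for one coordinate: the walks from `a` to `q + 1` minus
those to its mirror image `-(q + 1)`. -/
def besselRow (l : ℕ) (a : ℤ) (q : Fin l) : ℝ⟦X⟧ :=
  besselSeries (a - (q + 1)) - besselSeries (a + (q + 1))

lemma besselRow_zero : besselRow l 0 = 0 := by
  ext1 q
  rw [besselRow, zero_sub, zero_add, besselSeries_neg, sub_self, Pi.zero_apply]

lemma derivative_besselRow (a : ℤ) (q : Fin l) :
    derivative ℝ (besselRow l a q) = besselRow l (a - 1) q + besselRow l (a + 1) q := by
  simp only [besselRow, map_sub, derivative_besselSeries, sub_right_comm a, add_sub_right_comm a,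
    add_right_comm a]
  ring_nf

/-- The determinant of Bessel series attached to a strictly dominant weight `x` by the reflection
principle. -/
def detSeries (x : Fin l → ℤ) : ℝ⟦X⟧ := Matrix.det (.of fun p => besselRow l (x p))

lemma detSeries_eq_zero_of_apply_eq {a b : Fin l} (hab : a ≠ b) (h : x a = x b) :
    detSeries x = 0 :=
  Matrix.det_zero_of_row_eq hab (congrArg (besselRow l) h)

lemma detSeries_eq_zero_of_apply_eq_zero {a : Fin l} (h : x a = 0) : detSeries x = 0 :=
  Matrix.det_eq_zero_of_row_eq_zero a fun q => by
    rw [Matrix.of_apply, h, besselRow_zero, Pi.zero_apply]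

lemma detSeries_add_single (x : Fin l → ℤ) (p : Fin l) (c : ℤ) :
    detSeries (x + Pi.single p c) =
      ((Matrix.of fun p => besselRow l (x p)).updateRow p (besselRow l (x p + c))).det := by
  refine congrArg Matrix.det (Matrix.ext fun i q => ?_)
  rw [Matrix.of_apply, Pi.add_apply, Matrix.updateRow_apply]
  split_ifs with h
  · rw [h, Pi.single_eq_same]
  · rw [Pi.single_eq_of_ne h, add_zero, Matrix.of_apply]

lemma derivative_detSeries (x : Fin l → ℤ) : derivative ℝ (detSeries x) =
    ∑ p, (detSeries (x - Pi.single p 1) + detSeries (x + Pi.single p 1)) := by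
  refine (derivation_det _ _).trans (sum_congr rfl fun p _ => ?_)
  rw [sub_eq_add_neg x, ← Pi.single_neg, detSeries_add_single, detSeries_add_single,
    ← Matrix.det_updateRow_add]
  simp only [Matrix.of_apply, derivative_besselRow, sub_eq_add_neg]
  rfl

/-- Half the sum of the positive roots of type `C`, in the increasing convention. -/
def weylVector (l : ℕ) (p : Fin l) : ℤ := p + 1

-- A vector one step outside the closed chamber lies, after the shift by `weylVector`, on a wall.
lemma detSeries_eq_zero_of_not_isDominant (hv : IsDominant v) {p : Fin l} {c : ℤ} (hc : |c| ≤ 1)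
    (hw : ¬ IsDominant (v + Pi.single p c)) :
    detSeries (v + Pi.single p c + weylVector l) = 0 := by
  obtain ⟨hc₁, hc₂⟩ := abs_le.1 hc
  cases l with
  | zero => exact absurd ⟨fun a => a.elim0, fun a => a.elim0⟩ hw
  | succ l =>
    set w := v + Pi.single p c
    have hle (a b : Fin (l + 1)) (hab : a ≤ b) : w a ≤ w b + 1 := by
      have := hv.1 hab
      simp only [w, Pi.add_apply, Pi.single_apply]
      split_ifs <;> omega
    have hnonneg (a : Fin (l + 1)) : -1 ≤ w a := by
      have : 0 ≤ v a := hv.2 a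
      simp only [w, Pi.add_apply, Pi.single_apply]
      split_ifs <;> omega
    by_contra hdet
    have hmono : Monotone w := Fin.monotone_iff_le_succ.2 fun i => by
      by_contra! hlt
      have := hle _ _ i.castSucc_lt_succ.le
      refine hdet (detSeries_eq_zero_of_apply_eq i.castSucc_lt_succ.ne ?_)
      simp only [Pi.add_apply, weylVector, Fin.val_castSucc, Fin.val_succ]
      omega
    have hzero : 0 ≤ w 0 := by
      by_contra! hlt
      have := hnonneg 0
      refine hdet (detSeries_eq_zero_of_apply_eq_zero (a := 0) ?_)
      simp only [Pi.add_apply, weylVector, Fin.val_zero]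
      omega
    exact hw ⟨hmono, fun a => hzero.trans (hmono (Fin.zero_le a))⟩

lemma constantCoeff_detSeries (hv : IsDominant v) :
    constantCoeff (detSeries (v + weylVector l)) = if v = 0 then 1 else 0 := by
  rw [detSeries, RingHom.map_det]
  have hentry (p q : Fin l) : constantCoeff (besselRow l ((v + weylVector l) p) q) =
      if v p + p = q then 1 else 0 := by
    have : 0 ≤ v p := hv.2 p
    rw [Pi.add_apply, weylVector, besselRow, map_sub, constantCoeff_besselSeries,
      constantCoeff_besselSeries, if_neg (c := v p + (p + 1) + (q + 1) = 0) (by omega), sub_zero]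
    exact if_congr (by omega) rfl rfl
  split_ifs with h
  · refine (congrArg Matrix.det (Matrix.ext fun p q => ?_)).trans Matrix.det_one
    rw [RingHom.mapMatrix_apply, Matrix.map_apply, Matrix.of_apply, hentry, h, Matrix.one_apply]
    simp only [Pi.zero_apply, zero_add, Nat.cast_inj, Fin.ext_iff]
  · obtain ⟨a, ha⟩ := Function.ne_iff.1 h
    have hl : 0 < l := a.pos
    have hlast : v a ≤ v ⟨l - 1, Nat.sub_one_lt hl.ne'⟩ := hv.1 (Nat.le_sub_one_of_lt a.2)
    have hpos : 0 < v a := (hv.2 a).lt_of_ne' ha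
    refine Matrix.det_eq_zero_of_row_eq_zero ⟨l - 1, Nat.sub_one_lt hl.ne'⟩ fun q => ?_
    rw [RingHom.mapMatrix_apply, Matrix.map_apply, Matrix.of_apply, hentry]
    exact if_neg (by have := q.2; simp only; omega)

lemma coeff_succ_eq_coeff_derivative_div (n : ℕ) (F : ℝ⟦X⟧) :
    coeff (n + 1) F = coeff n (derivative ℝ F) / (n + 1) := by
  rw [coeff_derivative, mul_div_cancel_right₀ _ n.cast_add_one_ne_zero]

theorem coeff_detSeries (n : ℕ) (hv : IsDominant v) :
    coeff n (detSeries (v + weylVector l)) = dominantWalks n v / n.factorial := by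
  induction n generalizing v with
  | zero =>
    rw [coeff_zero_eq_constantCoeff_apply, constantCoeff_detSeries hv, dominantWalks]
    split_ifs <;> simp
  | succ n ih =>
    have hadd (p : Fin l) {c : ℤ} (hc : |c| ≤ 1) :
        coeff n (detSeries (v + Pi.single p c + weylVector l)) =
          if IsDominant (v + Pi.single p c) then
            (dominantWalks n (v + Pi.single p c) : ℝ) / n.factorial else 0 := by
      split_ifs with hw
      · exact ih hw
      · rw [detSeries_eq_zero_of_not_isDominant hv hc hw, map_zero]
    have hsub (p : Fin l) : coeff n (detSeries (v - Pi.single p 1 + weylVector l)) =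
        if IsDominant (v - Pi.single p 1) then
          (dominantWalks n (v - Pi.single p 1) : ℝ) / n.factorial else 0 := by
      simpa only [sub_eq_add_neg, Pi.single_neg] using hadd p (c := -1) (by simp)
    rw [coeff_succ_eq_coeff_derivative_div, derivative_detSeries, map_sum]
    simp only [map_add, add_sub_right_comm, add_right_comm v (weylVector l), hsub,
      hadd _ abs_one.le]
    rw [sum_add_distrib, ← sum_filter, ← sum_filter, ← sum_div, ← sum_div, ← add_div, div_div,
      dominantWalks, Nat.factorial_succ, mul_comm (n.factorial : ℝ)]
    push_cast
    rfl

end ReflectionPrinciple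

section Evaluation

open PowerSeries

variable {R : Type*} [NormedCommRing R]

lemma coeff_mul_mul_pow (F G : R⟦X⟧) (t : R) (n : ℕ) : coeff n (F * G) * t ^ n =
    ∑ p ∈ antidiagonal n, (coeff p.1 F * t ^ p.1) * (coeff p.2 G * t ^ p.2) := by
  rw [coeff_mul, sum_mul]
  refine sum_congr rfl fun p hp => ?_
  rw [← mem_antidiagonal.1 hp, pow_add, mul_mul_mul_comm]

lemma coeff_C_mul_pow_of_ne_zero (c t : R) {n : ℕ} (hn : n ≠ 0) :
    coeff n (C c) * t ^ n = 0 := by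
  rw [coeff_C, if_neg hn, zero_mul]

/-- The ring of power series that converge absolutely at `t`. -/
def absConvergent (t : R) : Subring R⟦X⟧ where
  carrier := {F | Summable fun n => ‖coeff n F * t ^ n‖}
  mul_mem' {F G} hF hG := by
    simp only [Set.mem_ofPred_eq, coeff_mul_mul_pow]
    exact summable_norm_sum_mul_antidiagonal_of_summable_norm
      (f := fun n => coeff n F * t ^ n) (g := fun n => coeff n G * t ^ n) hF hG
  one_mem' := summable_of_ne_finset_zero (s := {0}) fun n hn => by
    rw [← map_one C, coeff_C_mul_pow_of_ne_zero _ _ (by simpa using hn), norm_zero]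
  add_mem' {F G} hF hG := by
    refine (hF.add hG).of_nonneg_of_le (fun _ => norm_nonneg _) fun n => ?_
    rw [map_add, add_mul]
    exact norm_add_le _ _
  zero_mem' := by simp [summable_zero]
  neg_mem' {F} hF := by simpa using hF

variable [CompleteSpace R] {t : R}

/-- Evaluation at `t` of the power series that converge absolutely there. -/
def evalAt (t : R) : absConvergent t →+* R where
  toFun F := ∑' n, coeff n (F : R⟦X⟧) * t ^ n
  map_one' := by
    refine (tsum_eq_single 0 fun n hn => ?_).trans (by simp)
    rw [OneMemClass.coe_one, ← map_one C, coeff_C_mul_pow_of_ne_zero _ _ hn]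
  map_mul' F G := by
    simp only [Subring.coe_mul, coeff_mul_mul_pow]
    exact (tsum_mul_tsum_eq_tsum_sum_antidiagonal_of_summable_norm
      (f := fun n => coeff n (F : R⟦X⟧) * t ^ n) (g := fun n => coeff n (G : R⟦X⟧) * t ^ n)
      F.2 G.2).symm
  map_zero' := by simp
  map_add' F G := by
    simp only [Subring.coe_add, map_add, add_mul]
    exact F.2.of_norm.tsum_add G.2.of_norm

lemma hasSum_evalAt (F : absConvergent t) :
    HasSum (fun n => coeff n (F : R⟦X⟧) * t ^ n) (evalAt t F) :=
  F.2.of_norm.hasSum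

lemma hasSum_coeff_det {ι : Type*} [Fintype ι] [DecidableEq ι] {B : Matrix ι ι R⟦X⟧}
    {b : Matrix ι ι R} (hB : ∀ i j, B i j ∈ absConvergent t)
    (hb : ∀ i j, HasSum (fun n => coeff n (B i j) * t ^ n) (b i j)) :
    HasSum (fun n => coeff n B.det * t ^ n) b.det := by
  let B' : Matrix ι ι (absConvergent t) := .of fun i j => ⟨B i j, hB i j⟩
  have hdet : (B'.det : R⟦X⟧) = B.det := (absConvergent t).subtype.map_det B'
  have heval : evalAt t B'.det = b.det := by
    rw [RingHom.map_det]
    exact congrArg Matrix.det (Matrix.ext fun i j => (hb i j).tsum_eq)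
  rw [← hdet, ← heval]
  exact hasSum_evalAt _

end Evaluation

section BesselValues

open PowerSeries

variable {l : ℕ} {v : Fin l → ℤ}

lemma besselSeries_mem_absConvergent (m : ℤ) (t : ℝ) : besselSeries m ∈ absConvergent t := by
  refine (Real.summable_pow_div_factorial (2 * |t|)).of_nonneg_of_le (fun _ => norm_nonneg _)
    fun n => ?_
  have hcount : (stepCount n m : ℝ) ≤ 2 ^ n := mod_cast stepCount_le n m
  rw [besselSeries, coeff_mk, div_mul_eq_mul_div, norm_div, norm_mul, norm_pow, Real.norm_natCast,
    Real.norm_natCast, Real.norm_eq_abs, mul_pow]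
  gcongr

lemma hasSum_besselSeries (m : ℤ) (t : ℝ) :
    HasSum (fun n => coeff n (besselSeries m) * t ^ n) (besselI m t) := by
  have hinj : Function.Injective fun k => 2 * k + m.natAbs := fun a b h => by
    simpa using h
  have hterm (k : ℕ) : coeff (2 * k + m.natAbs) (besselSeries m) * t ^ (2 * k + m.natAbs) =
      t ^ (2 * k + m.natAbs) / (k.factorial * (k + m.natAbs).factorial) := by
    have hm : (-m.natAbs : ℤ) = 2 * k - (2 * k + m.natAbs : ℕ) := by push_cast; ring
    have : ((2 * k + m.natAbs).factorial : ℝ) ≠ 0 := Nat.cast_ne_zero.2 (Nat.factorial_ne_zero _)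
    rw [besselSeries, coeff_mk, ← stepCount_neg_natAbs, hm, stepCount_eq_choose,
      Nat.cast_choose ℝ (by omega), show 2 * k + m.natAbs - k = k + m.natAbs by omega,
      div_div_cancel_left' this, div_eq_inv_mul]
  have hzero (n : ℕ) (hn : n ∉ Set.range fun k => 2 * k + m.natAbs) :
      coeff n (besselSeries m) * t ^ n = 0 := by
    have hm (k : ℕ) : (2 * k - n : ℤ) ≠ -m.natAbs := fun h => hn ⟨k, by
      have : (2 * k + m.natAbs : ℤ) = n := by linarith
      exact_mod_cast this⟩
    rw [besselSeries, coeff_mk, ← stepCount_neg_natAbs, stepCount_eq_zero hm]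
    simp
  have hsum := (besselSeries_mem_absConvergent m t).of_norm.hasSum
  rwa [← hinj.tsum_eq fun n hn => not_not.1 fun h => hn (hzero n h), tsum_congr hterm] at hsum

theorem hasSum_dominantWalks (hv : IsDominant v) (t : ℝ) :
    HasSum (fun n => dominantWalks n v * t ^ n / n.factorial)
      (Matrix.det (.of fun p q : Fin l =>
        besselI (v p + p - q) t - besselI (v p + p + q + 2) t)) := by
  simp only [mul_div_right_comm, ← coeff_detSeries _ hv]
  refine hasSum_coeff_det (fun p q => ?_) fun p q => ?_
  · exact sub_mem (besselSeries_mem_absConvergent _ t) (besselSeries_mem_absConvergent _ t)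
  · have hsub : v p + (p + 1) - (q + 1) = v p + p - q := by ring
    have hadd : v p + (p + 1) + (q + 1) = v p + p + q + 2 := by ring
    simp only [Matrix.of_apply, besselRow, Pi.add_apply, weylVector, hsub, hadd, map_sub, sub_mul]
    exact (hasSum_besselSeries _ t).sub (hasSum_besselSeries _ t)

lemma dominantWalks_eq_zero_of_odd {n : ℕ} (h : Odd (n + ∑ r, v r)) : dominantWalks n v = 0 := by
  induction n generalizing v with
  | zero =>
    refine if_neg ?_
    rintro rfl
    simp at h
  | succ n ih =>
    have hsub (p : Fin l) : dominantWalks n (v - Pi.single p 1) = 0 := by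
      have hsum : n + ∑ r, (v - Pi.single p 1 : Fin l → ℤ) r = (n + 1 : ℕ) + ∑ r, v r - 2 := by
        simp only [Pi.sub_apply, sum_sub_distrib, sum_pi_single', mem_univ, if_true]
        push_cast
        ring
      exact ih (hsum ▸ h.sub_even even_two)
    have hadd (p : Fin l) : dominantWalks n (v + Pi.single p 1) = 0 := by
      have hsum : n + ∑ r, (v + Pi.single p 1 : Fin l → ℤ) r = (n + 1 : ℕ) + ∑ r, v r := by
        simp only [Pi.add_apply, sum_add_distrib, sum_pi_single', mem_univ, if_true]
        push_cast
        ring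
      exact ih (hsum ▸ h)
    simp only [dominantWalks, hsub, hadd, sum_const_zero, add_zero]

end BesselValues

/-- `Σ_{n≥0} f^S_{n,2l} · t^{2n}/(2n)! = det_{0≤j,k<l} ( I_{j−k}(2t) − I_{j+k+2}(2t) )`. -/
theorem fS_gf_eq_bessel_det (l : ℕ) (t : ℝ) :
    ∑' n : ℕ, (fSCount n (2 * l) : ℝ) * t ^ (2 * n) / (Nat.factorial (2 * n) : ℝ) =
      Matrix.det (Matrix.of fun j k : Fin l =>
        besselI ((j : ℕ) - (k : ℕ) : ℤ) t -
          besselI ((j : ℕ) + (k : ℕ) + 2 : ℤ) t) := by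
  have hwalks : HasSum (fun n => dominantWalks n (0 : Fin l → ℤ) * t ^ n / n.factorial) _ :=
    hasSum_dominantWalks isDominant_zero t
  simp only [Pi.zero_apply, zero_add] at hwalks
  have hodd : ∀ n ∉ Set.range (2 * · : ℕ → ℕ),
      dominantWalks n (0 : Fin l → ℤ) * t ^ n / n.factorial = 0 := fun n hn => by
    have : Odd n := Nat.not_even_iff_odd.1 fun h => hn (h.exists_two_nsmul.imp fun _ h => by
      simpa using h.symm)
    rw [dominantWalks_eq_zero_of_odd (by simpa using this), Nat.cast_zero, zero_mul, zero_div]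
  have heven := ((mul_right_injective₀ two_ne_zero).hasSum_iff hodd).2 hwalks
  simp only [fSCount_eq_dominantWalks]
  exact heven.tsum_eq
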